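/- arXiv:2404.05740 — 11 statements merged into one kernel-verified Lean document; each statement's English description precedes it below -/
import Mathlib

section
/- Let (X,d) be a metric space with at least 3 points, let F,G : ℝ≥0 × ℝ≥0 × ℝ≥0 → ℝ≥0 satisfy the (F,G)-conditions, and let T : X → X be an (F,G)-contracting mapping on X. Then T is continuous. -/
open scoped NNReal

theorem stmt1 {X : Type*} [MetricSpace X]
    (hX : ∃ x y z : X, x ≠ y ∧ y ≠ z ∧ x ≠ z)
    (F G : ℝ≥0 × ℝ≥0 × ℝ≥0 → ℝ≥0)
    (hFperm : ∀ ξ η ζ : ℝ≥0, F (η, ξ, ζ) = F (ξ, η, ζ) ∧ F (ξ, ζ, η) = F (ξ, η, ζ))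
    (hGperm : ∀ ξ η ζ : ℝ≥0, G (η, ξ, ζ) = G (ξ, η, ζ) ∧ G (ξ, ζ, η) = G (ξ, η, ζ))
    (hG1 : ∀ ξ η ζ : ℝ≥0, ξ ≤ G (ξ, η, ζ))
    (hFG : ∀ ξ η ζ : ℝ≥0, G (ξ, η, ζ) ≤ F (ξ, η, ζ))
    (hG0 : G (0, 0, 0) = 0)
    (hGcont0 : ContinuousAt G (0, 0, 0))
    (hGmono : Monotone G)
    (T : X → X) (α : ℝ≥0) (hα : α < 1)
    (hT : ∀ x y z : X, x ≠ y → y ≠ z → x ≠ z →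
      F (nndist (T x) (T y), nndist (T y) (T z), nndist (T x) (T z)) ≤
        α * G (nndist x y, nndist y z, nndist x z))
    :
    Continuous T := by
  rw [Metric.continuous_iff]
  intro x ε hε
  obtain ⟨δ, hδ, hGδ⟩ := Metric.continuousAt_iff.1 hGcont0 ε hε
  by_cases hiso : ∃ r > 0, ∀ y : X, dist y x < r → y = x
  · obtain ⟨r, hr, h⟩ := hiso
    refine ⟨r, hr, fun y hy => ?_⟩
    rw [h y hy, dist_self]
    exact hε
  · push Not at hiso
    refine ⟨δ / 2, by positivity, fun y hy => ?_⟩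
    by_cases hyx : y = x
    · rw [hyx, dist_self]
      exact hε
    obtain ⟨z, hz, hzx⟩ := hiso (min (δ / 2) (dist y x)) (lt_min (by positivity) (dist_pos.2 hyx))
    have hz1 := lt_of_lt_of_le hz (min_le_left _ _)
    have hz2 := lt_of_lt_of_le hz (min_le_right _ _)
    have hzy : x ≠ z := fun h => hzx h.symm
    have hyz : y ≠ z := by
      rintro rfl
      exact lt_irrefl _ hz2
    have h1 := hT y x z hyx hzy hyz
    have h2 : nndist (T y) (T x) ≤ G (nndist y x, nndist x z, nndist y z) :=
      (hG1 _ _ _).trans ((hFG _ _ _).trans (h1.trans (mul_le_of_le_one_left (zero_le) hα.le)))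
    have h3 : dist (G (nndist y x, nndist x z, nndist y z)) (G (0, 0, 0)) < ε := by
      apply hGδ
      have := dist_triangle y x z
      have e := dist_comm x z
      simp only [Prod.dist_eq, NNReal.dist_eq, coe_nndist, NNReal.coe_zero, sub_zero, abs_dist]
      refine max_lt (by linarith) (max_lt (by linarith) (by linarith))
    rw [hG0, NNReal.dist_eq, NNReal.coe_zero, sub_zero, abs_of_nonneg (NNReal.coe_nonneg _)] at h3
    have h4 : dist (T y) (T x) ≤ G (nndist y x, nndist x z, nndist y z) := by
      exact_mod_cast h2
    exact h4.trans_lt h3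
end

section
/- Let (X,d) be a complete metric space with at least 3 points, let F,G : ℝ≥0 × ℝ≥0 × ℝ≥0 → ℝ≥0 satisfy the (F,G)-conditions, and let T : X → X be an (F,G)-contracting mapping on X which does not possess periodic points of prime period 2 (i.e., there is no x ∈ X with T(Tx)=x and Tx ≠ x). Then T has a fixed point. -/
open scoped NNReal

theorem stmt2 {X : Type*} [MetricSpace X] [CompleteSpace X]
    (hX : ∃ x y z : X, x ≠ y ∧ y ≠ z ∧ x ≠ z)
    (F G : ℝ≥0 × ℝ≥0 × ℝ≥0 → ℝ≥0)
    (hFperm : ∀ ξ η ζ : ℝ≥0, F (η, ξ, ζ) = F (ξ, η, ζ) ∧ F (ξ, ζ, η) = F (ξ, η, ζ))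
    (hGperm : ∀ ξ η ζ : ℝ≥0, G (η, ξ, ζ) = G (ξ, η, ζ) ∧ G (ξ, ζ, η) = G (ξ, η, ζ))
    (hG1 : ∀ ξ η ζ : ℝ≥0, ξ ≤ G (ξ, η, ζ))
    (hFG : ∀ ξ η ζ : ℝ≥0, G (ξ, η, ζ) ≤ F (ξ, η, ζ))
    (hG0 : G (0, 0, 0) = 0)
    (hGcont0 : ContinuousAt G (0, 0, 0))
    (hGmono : Monotone G)
    (T : X → X) (α : ℝ≥0) (hα : α < 1)
    (hT : ∀ x y z : X, x ≠ y → y ≠ z → x ≠ z →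
      F (nndist (T x) (T y), nndist (T y) (T z), nndist (T x) (T z)) ≤
        α * G (nndist x y, nndist y z, nndist x z))
    (hper : ¬ ∃ x : X, T (T x) = x ∧ T x ≠ x)
    :
    ∃ x : X, T x = x := by
  by_contra hfix
  have hfix : ∀ x, T x ≠ x := fun x hx => hfix ⟨x, hx⟩
  have hper2 : ∀ x, T (T x) ≠ x := fun x hx => hper ⟨x, hx, hfix x⟩
  have hT' : ∀ x y z : X, x ≠ y → y ≠ z → x ≠ z →
      G (nndist (T x) (T y), nndist (T y) (T z), nndist (T x) (T z)) ≤
        α * G (nndist x y, nndist y z, nndist x z) :=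
    fun x y z h1 h2 h3 => (hFG _ _ _).trans (hT x y z h1 h2 h3)
  obtain ⟨x0, -⟩ := hX
  let u : ℕ → X := fun n => T^[n] x0
  have hu : ∀ n, u (n+1) = T (u n) := fun n => Function.iterate_succ_apply' T n x0
  let q : X → ℝ≥0 := fun x => G (nndist x (T x), nndist (T x) (T (T x)), nndist x (T (T x)))
  have hq : ∀ x, q (T x) ≤ α * q x := fun x =>
    hT' x (T x) (T (T x)) (hfix x).symm (hfix (T x)).symm (hper2 x).symm
  have hqpos : ∀ x, 0 < q x := fun x =>
    lt_of_lt_of_le (pos_iff_ne_zero.2 (fun h => hfix x (nndist_eq_zero.1 h).symm)) (hG1 _ _ _)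
  have hqlt : ∀ x, q (T x) < q x := fun x =>
    (hq x).trans_lt (mul_lt_of_lt_one_left (hqpos x) hα)
  have hanti : StrictAnti (fun n => q (u n)) := by
    apply strictAnti_nat_of_succ_lt
    intro n
    simp only [hu]
    exact hqlt _
  have hinj : Function.Injective u := fun m n h =>
    hanti.injective (by simp only [h])
  have hgeo : ∀ n, q (u n) ≤ q (u 0) * α ^ n := by
    intro n
    induction n with
    | zero => simp
    | succ k ih =>
      rw [hu]
      calc q (T (u k)) ≤ α * q (u k) := hq _
        _ ≤ α * (q (u 0) * α ^ k) := by gcongr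
        _ = _ := by ring
  have hcau : CauchySeq u := by
    apply cauchySeq_of_le_geometric (α : ℝ) (q (u 0) : ℝ) (by exact_mod_cast hα)
    intro n
    rw [← coe_nndist, hu]
    exact_mod_cast (hG1 _ _ _).trans (hgeo n)
  obtain ⟨a, ha⟩ := cauchySeq_tendsto_of_complete hcau
  have ha1 : Filter.Tendsto (fun n => u (n+1)) Filter.atTop (nhds a) :=
    ha.comp (Filter.tendsto_add_atTop_nat 1)
  have hne : ∀ᶠ n in Filter.atTop, u n ≠ a := by
    by_cases h : ∃ N, u N = a
    · obtain ⟨N, hN⟩ := h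
      filter_upwards [Filter.eventually_gt_atTop N] with n hn h
      exact hn.ne' (hinj (h.trans hN.symm))
    · exact Filter.Eventually.of_forall fun n hn => h ⟨n, hn⟩
  have hne1 : ∀ᶠ n in Filter.atTop, u (n+1) ≠ a :=
    (Filter.tendsto_add_atTop_nat 1).eventually hne
  have hb : ∀ᶠ n in Filter.atTop, nndist (T a) (u (n+1)) ≤
      α * G (nndist a (u n), nndist (u n) (u (n+1)), nndist a (u (n+1))) := by
    filter_upwards [hne, hne1] with n h1 h2
    rw [hu n] at h2 ⊢
    exact (hG1 _ _ _).trans (hT' a (u n) (T (u n)) h1.symm (hfix _).symm h2.symm)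
  have hlim : Filter.Tendsto (fun n => α * G (nndist a (u n), nndist (u n) (u (n+1)),
      nndist a (u (n+1)))) Filter.atTop (nhds 0) := by
    have e1 : Filter.Tendsto (fun n => nndist a (u n)) Filter.atTop (nhds 0) := by
      simpa using (tendsto_const_nhds (x := a)).nndist ha
    have e2 : Filter.Tendsto (fun n => nndist (u n) (u (n+1))) Filter.atTop (nhds 0) := by
      simpa using ha.nndist ha1
    have e3 : Filter.Tendsto (fun n => nndist a (u (n+1))) Filter.atTop (nhds 0) := by
      simpa using (tendsto_const_nhds (x := a)).nndist ha1
    have e4 := (hGcont0.tendsto.comp (e1.prodMk_nhds (e2.prodMk_nhds e3))).const_mul α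
    simpa [hG0, Function.comp_def] using e4
  have h0 : Filter.Tendsto (fun n => nndist (T a) (u (n+1))) Filter.atTop (nhds 0) :=
    tendsto_of_tendsto_of_tendsto_of_le_of_le' tendsto_const_nhds hlim
      (Filter.Eventually.of_forall fun _ => zero_le) hb
  have h1 := (tendsto_const_nhds (x := T a)).nndist ha1
  exact hfix a (nndist_eq_zero.1 (tendsto_nhds_unique h1 h0))
end

section
/- Let (X,d) be a metric space with at least 3 points, let F,G : ℝ≥0 × ℝ≥0 × ℝ≥0 → ℝ≥0 satisfy the (F,G)-conditions, and let T : X → X be an (F,G)-contracting mapping on X. Then T has at most two fixed points; i.e., there do not exist three pairwise distinct points x,y,z ∈ X with Tx=x, Ty=y and Tz=z. -/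
open scoped NNReal

theorem stmt3 {X : Type*} [MetricSpace X]
    (hX : ∃ x y z : X, x ≠ y ∧ y ≠ z ∧ x ≠ z)
    (F G : ℝ≥0 × ℝ≥0 × ℝ≥0 → ℝ≥0)
    (hFperm : ∀ ξ η ζ : ℝ≥0, F (η, ξ, ζ) = F (ξ, η, ζ) ∧ F (ξ, ζ, η) = F (ξ, η, ζ))
    (hGperm : ∀ ξ η ζ : ℝ≥0, G (η, ξ, ζ) = G (ξ, η, ζ) ∧ G (ξ, ζ, η) = G (ξ, η, ζ))
    (hG1 : ∀ ξ η ζ : ℝ≥0, ξ ≤ G (ξ, η, ζ))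
    (hFG : ∀ ξ η ζ : ℝ≥0, G (ξ, η, ζ) ≤ F (ξ, η, ζ))
    (hG0 : G (0, 0, 0) = 0)
    (hGcont0 : ContinuousAt G (0, 0, 0))
    (hGmono : Monotone G)
    (T : X → X) (α : ℝ≥0) (hα : α < 1)
    (hT : ∀ x y z : X, x ≠ y → y ≠ z → x ≠ z →
      F (nndist (T x) (T y), nndist (T y) (T z), nndist (T x) (T z)) ≤
        α * G (nndist x y, nndist y z, nndist x z))
    :
    ¬ ∃ x y z : X, x ≠ y ∧ y ≠ z ∧ x ≠ z ∧ T x = x ∧ T y = y ∧ T z = z := by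
  rintro ⟨x, y, z, hxy, hyz, hxz, hx, hy, hz⟩
  have h := hT x y z hxy hyz hxz
  rw [hx, hy, hz] at h
  have h1 := (hFG _ _ _).trans h
  have hd : 0 < nndist x y := pos_iff_ne_zero.mpr (fun h0 => hxy (nndist_eq_zero.mp h0))
  have hg : 0 < G (nndist x y, nndist y z, nndist x z) := lt_of_lt_of_le hd (hG1 _ _ _)
  exact absurd h1 (not_le.mpr (mul_lt_of_lt_one_left hg hα))
end

section
/- Let (X,d) be a complete metric space with at least 3 points, let F,G : ℝ≥0 × ℝ≥0 × ℝ≥0 → ℝ≥0 satisfy the (F,G)-conditions and additionally be continuous on their whole domain, and let T : X → X be an (F,G)-contracting mapping without periodic points of prime period 2. Suppose T has a fixed point x* which is the limit of some iteration sequence x₀, x₁ = Tx₀, x₂ = Tx₁, … with xₙ ≠ x* for all n = 1,2,…. Then x* is the unique fixed point of T. -/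
open scoped NNReal

theorem stmt4 {X : Type*} [MetricSpace X] [CompleteSpace X]
    (hX : ∃ x y z : X, x ≠ y ∧ y ≠ z ∧ x ≠ z)
    (F G : ℝ≥0 × ℝ≥0 × ℝ≥0 → ℝ≥0)
    (hFperm : ∀ ξ η ζ : ℝ≥0, F (η, ξ, ζ) = F (ξ, η, ζ) ∧ F (ξ, ζ, η) = F (ξ, η, ζ))
    (hGperm : ∀ ξ η ζ : ℝ≥0, G (η, ξ, ζ) = G (ξ, η, ζ) ∧ G (ξ, ζ, η) = G (ξ, η, ζ))
    (hG1 : ∀ ξ η ζ : ℝ≥0, ξ ≤ G (ξ, η, ζ))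
    (hFG : ∀ ξ η ζ : ℝ≥0, G (ξ, η, ζ) ≤ F (ξ, η, ζ))
    (hG0 : G (0, 0, 0) = 0)
    (hGcont0 : ContinuousAt G (0, 0, 0))
    (hGmono : Monotone G)
    (T : X → X) (α : ℝ≥0) (hα : α < 1)
    (hT : ∀ x y z : X, x ≠ y → y ≠ z → x ≠ z →
      F (nndist (T x) (T y), nndist (T y) (T z), nndist (T x) (T z)) ≤
        α * G (nndist x y, nndist y z, nndist x z))
    (hFcont : Continuous F) (hGcont : Continuous G)
    (hper : ¬ ∃ x : X, T (T x) = x ∧ T x ≠ x)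
    (xstar : X) (hfix : T xstar = xstar)
    (x : ℕ → X) (hiter : ∀ n : ℕ, x (n + 1) = T (x n))
    (hne : ∀ n : ℕ, 1 ≤ n → x n ≠ xstar)
    (hlim : Filter.Tendsto x Filter.atTop (nhds xstar))
    :
    ∀ y : X, T y = y → y = xstar := by
  intro y hy
  by_contra hyx
  have h1 : Filter.Tendsto (fun n => F (nndist xstar y, nndist y (x (n+1)), nndist xstar (x (n+1))))
      Filter.atTop (nhds (F (nndist xstar y, nndist y xstar, nndist xstar xstar))) := by
    have hc : Continuous (fun z => F (nndist xstar y, nndist y z, nndist xstar z)) := by fun_prop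
    exact (hc.tendsto xstar).comp (hlim.comp (Filter.tendsto_add_atTop_nat 1))
  have h2 : Filter.Tendsto (fun n => α * G (nndist xstar y, nndist y (x n), nndist xstar (x n)))
      Filter.atTop (nhds (α * G (nndist xstar y, nndist y xstar, nndist xstar xstar))) := by
    have hc : Continuous (fun z => α * G (nndist xstar y, nndist y z, nndist xstar z)) := by fun_prop
    exact (hc.tendsto xstar).comp hlim
  have h3 := le_of_tendsto_of_tendsto h1 h2 (by
    have he : ∀ᶠ n in Filter.atTop, x n ≠ y := hlim.eventually_ne (Ne.symm hyx)
    filter_upwards [he, Filter.eventually_ge_atTop 1] with n hn hn1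
    have := hT xstar y (x n) (Ne.symm hyx) (Ne.symm hn) (Ne.symm (hne n hn1))
    rwa [hfix, hy, ← hiter] at this)
  have h4 := (hFG _ _ _).trans h3
  have h5 := hG1 (nndist xstar y) (nndist y xstar) (nndist xstar xstar)
  have h6 : 0 < nndist xstar y := by
    rw [pos_iff_ne_zero, ne_eq, nndist_eq_zero]
    exact Ne.symm hyx
  have h7 := mul_lt_of_lt_one_left (h6.trans_le h5) hα
  exact absurd h4 (not_le.mpr h7)
end

section
/- Let (X,d) be a metric space with at least 3 points, let F,G : ℝ≥0 × ℝ≥0 × ℝ≥0 → ℝ≥0 satisfy the (F,G)-conditions and be continuous, and let T : X → X be an (F,G)-contracting mapping with constant α ∈ [0,1). Suppose additionally that there exists k > 0 with G(ξ,ξ,0) ≤ k·ξ for all ξ ∈ ℝ≥0 and α·k < 1. If x ∈ X is an accumulation point of X, then d(Tx,Ty) ≤ α·k·d(x,y) for all y ∈ X. -/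
open scoped NNReal

theorem stmt5 {X : Type*} [MetricSpace X]
    (hX : ∃ x y z : X, x ≠ y ∧ y ≠ z ∧ x ≠ z)
    (F G : ℝ≥0 × ℝ≥0 × ℝ≥0 → ℝ≥0)
    (hFperm : ∀ ξ η ζ : ℝ≥0, F (η, ξ, ζ) = F (ξ, η, ζ) ∧ F (ξ, ζ, η) = F (ξ, η, ζ))
    (hGperm : ∀ ξ η ζ : ℝ≥0, G (η, ξ, ζ) = G (ξ, η, ζ) ∧ G (ξ, ζ, η) = G (ξ, η, ζ))
    (hG1 : ∀ ξ η ζ : ℝ≥0, ξ ≤ G (ξ, η, ζ))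
    (hFG : ∀ ξ η ζ : ℝ≥0, G (ξ, η, ζ) ≤ F (ξ, η, ζ))
    (hG0 : G (0, 0, 0) = 0)
    (hGcont0 : ContinuousAt G (0, 0, 0))
    (hGmono : Monotone G)
    (T : X → X) (α : ℝ≥0) (hα : α < 1)
    (hT : ∀ x y z : X, x ≠ y → y ≠ z → x ≠ z →
      F (nndist (T x) (T y), nndist (T y) (T z), nndist (T x) (T z)) ≤
        α * G (nndist x y, nndist y z, nndist x z))
    (hFcont : Continuous F) (hGcont : Continuous G)
    (k : ℝ≥0) (hk0 : 0 < k)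
    (hk : ∀ ξ : ℝ≥0, G (ξ, ξ, 0) ≤ k * ξ)
    (hαk : α * k < 1)
    (x : X) (hacc : ∀ ε : ℝ, 0 < ε → (Metric.ball x ε).Infinite)
    :
    ∀ y : X, nndist (T x) (T y) ≤ α * k * nndist x y := by
  intro y
  rcases eq_or_ne x y with rfl | hxy
  · simp
  have hne : (nhdsWithin x {x}ᶜ).NeBot := by
    rw [← mem_closure_iff_nhdsWithin_neBot, Metric.mem_closure_iff]
    intro ε hε
    obtain ⟨z, hz, hzx⟩ := (hacc ε hε).exists_notMem_finset {x}
    exact ⟨z, by simpa using hzx, by simpa [dist_comm] using hz⟩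
  have hcont : Continuous (fun z => α * G (nndist x y, nndist y z, nndist x z)) := by
    fun_prop
  have hlim : Filter.Tendsto (fun z => α * G (nndist x y, nndist y z, nndist x z))
      (nhdsWithin x {x}ᶜ) (nhds (α * G (nndist x y, nndist y x, nndist x x))) :=
    (hcont.tendsto x).mono_left nhdsWithin_le_nhds
  have hle : nndist (T x) (T y) ≤ α * G (nndist x y, nndist y x, nndist x x) := by
    refine ge_of_tendsto hlim ?_
    have h1 : ∀ᶠ z in nhdsWithin x {x}ᶜ, z ≠ y :=
      nhdsWithin_le_nhds (isOpen_ne.mem_nhds hxy)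
    filter_upwards [h1, self_mem_nhdsWithin] with z hzy hzx
    have hzx' : z ≠ x := hzx
    exact ((hG1 _ _ _).trans (hFG _ _ _)).trans (hT x y z hxy hzy.symm hzx'.symm)
  rw [nndist_comm y x, nndist_self] at hle
  rw [mul_assoc]
  exact hle.trans (mul_le_mul_right (hk _) α)
end

section
/- Let (X,d) be a metric space with at least 3 points, let F,G : ℝ≥0 × ℝ≥0 × ℝ≥0 → ℝ≥0 satisfy the (F,G)-conditions and be continuous, and let T : X → X be an (F,G)-contracting mapping with constant α ∈ [0,1) such that there exists k > 0 with G(ξ,ξ,0) ≤ k·ξ for all ξ ∈ ℝ≥0 and α·k < 1. If every point of X is an accumulation point of X, then T is a contraction mapping: d(Tx,Ty) ≤ α·k·d(x,y) for all x,y ∈ X. -/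
open scoped NNReal

theorem stmt6 {X : Type*} [MetricSpace X]
    (hX : ∃ x y z : X, x ≠ y ∧ y ≠ z ∧ x ≠ z)
    (F G : ℝ≥0 × ℝ≥0 × ℝ≥0 → ℝ≥0)
    (hFperm : ∀ ξ η ζ : ℝ≥0, F (η, ξ, ζ) = F (ξ, η, ζ) ∧ F (ξ, ζ, η) = F (ξ, η, ζ))
    (hGperm : ∀ ξ η ζ : ℝ≥0, G (η, ξ, ζ) = G (ξ, η, ζ) ∧ G (ξ, ζ, η) = G (ξ, η, ζ))
    (hG1 : ∀ ξ η ζ : ℝ≥0, ξ ≤ G (ξ, η, ζ))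
    (hFG : ∀ ξ η ζ : ℝ≥0, G (ξ, η, ζ) ≤ F (ξ, η, ζ))
    (hG0 : G (0, 0, 0) = 0)
    (hGcont0 : ContinuousAt G (0, 0, 0))
    (hGmono : Monotone G)
    (T : X → X) (α : ℝ≥0) (hα : α < 1)
    (hT : ∀ x y z : X, x ≠ y → y ≠ z → x ≠ z →
      F (nndist (T x) (T y), nndist (T y) (T z), nndist (T x) (T z)) ≤
        α * G (nndist x y, nndist y z, nndist x z))
    (hFcont : Continuous F) (hGcont : Continuous G)
    (k : ℝ≥0) (hk0 : 0 < k)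
    (hk : ∀ ξ : ℝ≥0, G (ξ, ξ, 0) ≤ k * ξ)
    (hαk : α * k < 1)
    (hacc : ∀ x : X, ∀ ε : ℝ, 0 < ε → (Metric.ball x ε).Infinite)
    :
    ∀ x y : X, nndist (T x) (T y) ≤ α * k * nndist x y := by
  intro x y
  rcases eq_or_ne x y with rfl | hxy
  · simp
  have hne : (nhdsWithin x ({x, y} : Set X)ᶜ).NeBot := by
    rw [← mem_closure_iff_nhdsWithin_neBot, Metric.mem_closure_iff]
    intro ε hε
    obtain ⟨z, hz, hz2⟩ := (hacc x ε hε).exists_notMem_finite (Set.toFinite ({x, y} : Set X))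
    exact ⟨z, hz2, by rw [dist_comm]; exact hz⟩
  have hc : Continuous fun z : X => α * G (nndist x y, nndist y z, nndist x z) := by
    fun_prop
  have ht := (hc.tendsto x).mono_left (nhdsWithin_le_nhds (s := ({x, y} : Set X)ᶜ))
  have h1 : nndist (T x) (T y) ≤ α * G (nndist x y, nndist y x, nndist x x) := by
    refine ge_of_tendsto ht ?_
    filter_upwards [self_mem_nhdsWithin] with z hz
    simp only [Set.mem_compl_iff, Set.mem_insert_iff, Set.mem_singleton_iff, not_or] at hz
    exact (hG1 _ _ _).trans ((hFG _ _ _).trans (hT x y z hxy (Ne.symm hz.2) (Ne.symm hz.1)))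
  rw [nndist_self, nndist_comm y x] at h1
  rw [mul_assoc]
  exact h1.trans (mul_le_mul_right (hk _) α)
end

section
/- Let (X,d) be a metric space with at least 3 points and let T : X → X be a mapping contracting perimeters of triangles in the sense of Edelstein. Then T is continuous. -/
open scoped NNReal

theorem stmt7 {X : Type*} [MetricSpace X]
    (hX : ∃ x y z : X, x ≠ y ∧ y ≠ z ∧ x ≠ z)
    (T : X → X)
    (hT : ∀ x y z : X, x ≠ y → y ≠ z → x ≠ z →
      dist (T x) (T y) + dist (T y) (T z) + dist (T x) (T z) <
        dist x y + dist y z + dist z x)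
    :
    Continuous T := by
  rw [Metric.continuous_iff]
  intro a ε hε
  by_cases h : ∃ δ > 0, ∀ z, dist z a < δ → z = a
  · obtain ⟨δ, hδ, h⟩ := h
    refine ⟨δ, hδ, fun y hy => ?_⟩
    rw [h y hy, dist_self]
    exact hε
  · push Not at h
    refine ⟨ε / 4, by linarith, fun y hy => ?_⟩
    by_cases hya : y = a
    · rw [hya, dist_self]
      exact hε
    · obtain ⟨z, hz, hza⟩ := h (dist y a) (dist_pos.2 hya)
      have hyz : y ≠ z := by
        rintro rfl
        exact lt_irrefl _ hz
      have h1 := hT y a z hya hza.symm hyz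
      have h2 := dist_triangle z a y
      have h3 : 0 ≤ dist (T a) (T z) := dist_nonneg
      have h4 : 0 ≤ dist (T y) (T z) := dist_nonneg
      rw [dist_comm a y] at h2
      rw [dist_comm a z] at h1
      linarith
end

section
/- Let (X,d) be a metric space with at least 3 points and let T : X → X be a mapping contracting perimeters of triangles in the sense of Edelstein which does not possess periodic points of prime period 2 (i.e., there is no x ∈ X with T(Tx)=x and Tx ≠ x). Assume there exists x ∈ X such that the sequence of iterates (Tⁿx) has a subsequence (Tⁿⁱx) converging to a point ξ ∈ X. Then ξ is a fixed point of T. -/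
open scoped NNReal

theorem stmt8 {X : Type*} [MetricSpace X]
    (hX : ∃ x y z : X, x ≠ y ∧ y ≠ z ∧ x ≠ z)
    (T : X → X)
    (hT : ∀ x y z : X, x ≠ y → y ≠ z → x ≠ z →
      dist (T x) (T y) + dist (T y) (T z) + dist (T x) (T z) <
        dist x y + dist y z + dist z x)
    (hper : ¬ ∃ x : X, T (T x) = x ∧ T x ≠ x)
    (x : X) (n : ℕ → ℕ) (hn : StrictMono n) (ξ : X)
    (hlim : Filter.Tendsto (fun i : ℕ => T^[n i] x) Filter.atTop (nhds ξ))
    :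
    T ξ = ξ := by
  have hc : Continuous T := by
    rw [continuous_iff_continuousAt]
    intro a
    rw [Metric.continuousAt_iff]
    intro ε hε
    by_cases h : ∃ z, z ≠ a ∧ dist z a < ε / 4
    · obtain ⟨z, hza, hz⟩ := h
      refine ⟨dist z a, dist_pos.2 hza, fun {y} hy => ?_⟩
      by_cases hya : y = a
      · subst hya; simpa using hε
      have hyz : y ≠ z := by rintro rfl; exact lt_irrefl _ hy
      have h1 := hT y a z hya hza.symm hyz
      have h2 := dist_triangle z a y
      have h3 : 0 ≤ dist (T a) (T z) := dist_nonneg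
      have h4 : 0 ≤ dist (T y) (T z) := dist_nonneg
      rw [dist_comm a z] at h1
      rw [dist_comm a y] at h2
      linarith
    · push Not at h
      refine ⟨ε / 4, by linarith, fun {y} hy => ?_⟩
      by_cases hya : y = a
      · subst hya; simpa using hε
      exact absurd hy (not_lt.2 (h y hya))
  obtain ⟨p, hp⟩ : ∃ p : X → ℝ, p = fun y =>
      dist y (T y) + dist (T y) (T (T y)) + dist (T (T y)) y := ⟨_, rfl⟩
  have hpc : Continuous p := by rw [hp]; fun_prop
  have hlt : ∀ y, T y ≠ y → p (T y) < p y := by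
    intro y hy
    have hy2 : T (T y) ≠ y := fun h => hper ⟨y, h, hy⟩
    by_cases h : T (T y) = T y
    · have := dist_pos.2 hy
      simp only [hp, h, dist_self, dist_comm y (T y)]
      linarith
    · have := hT y (T y) (T (T y)) hy.symm (Ne.symm h) hy2.symm
      simp only [hp]
      rw [dist_comm (T (T (T y))) (T y)]
      exact this
  have hanti : Antitone fun k => p (T^[k] x) := by
    refine antitone_nat_of_succ_le fun k => ?_
    rw [Function.iterate_succ_apply']
    by_cases h : T (T^[k] x) = T^[k] x
    · rw [h]
    · exact (hlt _ h).le
  have hbdd : BddBelow (Set.range fun k => p (T^[k] x)) := by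
    refine ⟨0, ?_⟩
    rintro _ ⟨k, rfl⟩
    simp only [hp]
    positivity
  have hL := tendsto_atTop_ciInf hanti hbdd
  have e1 := tendsto_nhds_unique ((hpc.tendsto ξ).comp hlim) (hL.comp hn.tendsto_atTop)
  have e2 := tendsto_nhds_unique (((hpc.comp hc).tendsto ξ).comp hlim)
    (((hL.comp (Filter.tendsto_add_atTop_nat 1)).comp hn.tendsto_atTop).congr (fun i => by
      simp only [Function.comp, Function.iterate_succ_apply']))
  by_contra h
  have := hlt ξ h
  simp only [Function.comp] at e2
  rw [e1, e2] at this
  exact lt_irrefl _ this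
end

section
/- Let (X,d) be a compact metric space with at least 3 points and let T : X → X be a mapping contracting perimeters of triangles in the sense of Edelstein which does not possess periodic points of prime period 2 (i.e., there is no x ∈ X with T(Tx)=x and Tx ≠ x). Then T has a fixed point. -/
open scoped NNReal

theorem stmt10 {X : Type*} [MetricSpace X] [CompactSpace X]
    (hX : ∃ x y z : X, x ≠ y ∧ y ≠ z ∧ x ≠ z)
    (T : X → X)
    (hT : ∀ x y z : X, x ≠ y → y ≠ z → x ≠ z →
      dist (T x) (T y) + dist (T y) (T z) + dist (T x) (T z) <
        dist x y + dist y z + dist z x)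
    (hper : ¬ ∃ x : X, T (T x) = x ∧ T x ≠ x)
    :
    ∃ x : X, T x = x := by
  have hc : Continuous T := by
    rw [Metric.continuous_iff]
    intro x ε hε
    by_cases h : ∃ y z : X, x ≠ y ∧ y ≠ z ∧ x ≠ z ∧ dist y x < ε / 4 ∧ dist z x < ε / 4
    · obtain ⟨p, q, hxp, hpq, hxq, hp, hq⟩ := h
      refine ⟨ε / 4, by linarith, fun y hy => ?_⟩
      have key : ∀ z, x ≠ y → y ≠ z → x ≠ z → dist z x < ε / 4 → dist (T y) (T x) < ε := by
        intro z h1 h2 h3 h4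
        have := hT x y z h1 h2 h3
        have t := dist_triangle y x z
        rw [dist_comm x y] at this
        rw [dist_comm x z] at t
        rw [dist_comm (T x) (T y)] at this
        have a := dist_nonneg (x := T y) (y := T z)
        have b := dist_nonneg (x := T x) (y := T z)
        linarith
      by_cases hxy : x = y
      · subst hxy; simpa using hε
      by_cases hyp : y = p
      · exact key q hxy (hyp ▸ hpq) hxq hq
      · exact key p hxy hyp hxp hp
    · by_cases h2 : ∃ p, x ≠ p ∧ dist p x < ε / 4
      · obtain ⟨p, hxp, hp⟩ := h2
        refine ⟨dist p x, dist_pos.2 (Ne.symm hxp), fun y hy => ?_⟩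
        by_cases hxy : x = y
        · subst hxy; simpa using hε
        · exact absurd ⟨p, y, hxp, fun e => by subst e; exact lt_irrefl _ hy, hxy, hp,
            hy.trans hp⟩ h
      · refine ⟨ε / 4, by linarith, fun y hy => ?_⟩
        by_cases hxy : x = y
        · subst hxy; simpa using hε
        · exact absurd ⟨y, hxy, hy⟩ h2
  by_contra hfix
  push Not at hfix hper
  obtain ⟨x0, -⟩ := hX
  have hF : Continuous fun x => dist x (T x) + dist (T x) (T (T x)) + dist (T (T x)) x := by
    fun_prop
  obtain ⟨x, -, hx⟩ := isCompact_univ.exists_isMinOn ⟨x0, Set.mem_univ _⟩ hF.continuousOn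
  have h1 := hx (Set.mem_univ (T x))
  have h2 := hT x (T x) (T (T x)) (hfix x).symm (hfix (T x)).symm
    (fun e => hfix x (hper x e.symm))
  simp only [Set.mem_setOf_eq] at h1
  rw [dist_comm (T (T (T x))) (T x)] at h1
  linarith
end

section
/- There exists a complete metric space (X,d) with countably infinitely many points and a mapping T : X → X such that: (a) T is a mapping contracting perimeters of triangles in the sense of Edelstein; (b) T is not contractive (there exist x ≠ y with d(Tx,Ty) ≥ d(x,y)); and (c) T is not a mapping contracting perimeters of triangles, i.e., for no α ∈ [0,1) does d(Tx,Ty)+d(Ty,Tz)+d(Tx,Tz) ≤ α(d(x,y)+d(y,z)+d(x,z)) hold for all pairwise distinct x,y,z ∈ X. -/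
structure YY where
  n : ℕ

noncomputable def ww (k : ℕ) : ℝ := 1 / (max (k : ℝ) 2)

lemma ww_pos (k : ℕ) : 0 < ww k := by unfold ww; positivity

lemma ww_le (k : ℕ) : ww (k + 1) ≤ ww k := by
  unfold ww
  apply one_div_le_one_div_of_le (by positivity)
  apply max_le_max _ le_rfl
  push_cast; linarith

lemma ww_lt (k : ℕ) (hk : 2 ≤ k) : ww (k + 1) < ww k := by
  unfold ww
  have h : (2 : ℝ) ≤ k := by exact_mod_cast hk
  apply one_div_lt_one_div_of_lt (by positivity)
  push_cast
  rw [max_eq_left h, max_eq_left (by linarith)]; linarith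

open Classical in
noncomputable instance : MetricSpace YY where
  dist x y := if x = y then 0 else 1 + ww x.n + ww y.n
  dist_self x := by simp
  dist_comm x y := by
    by_cases h : x = y
    · simp [h]
    · simp [h, Ne.symm h]; ring
  dist_triangle x y z := by
    have := ww_pos x.n
    have := ww_pos y.n
    have := ww_pos z.n
    split_ifs <;> first | linarith | (subst_vars; first | linarith | simp_all)
  eq_of_dist_eq_zero {x y} h := by
    by_contra hne
    have := ww_pos x.n
    have := ww_pos y.n
    simp only [hne, if_false] at h
    linarith

open Classical in
lemma YY_dist {x y : YY} (h : x ≠ y) : dist x y = 1 + ww x.n + ww y.n := by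
  change (if x = y then (0:ℝ) else 1 + ww x.n + ww y.n) = _
  simp [h]

def TT (x : YY) : YY := ⟨x.n + 1⟩

lemma YY_ne {x y : YY} : x ≠ y ↔ x.n ≠ y.n := by
  cases x; cases y; simp

lemma TT_dist {x y : YY} (h : x ≠ y) :
    dist (TT x) (TT y) = 1 + ww (x.n + 1) + ww (y.n + 1) := by
  rw [YY_dist]
  · rfl
  · rw [YY_ne] at h ⊢; simpa [TT] using h

theorem stmt14 :
    ∃ (X : Type) (_ : MetricSpace X), CompleteSpace X ∧ Countable X ∧ Infinite X ∧
      ∃ T : X → X,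
        (∀ x y z : X, x ≠ y → y ≠ z → x ≠ z →
          dist (T x) (T y) + dist (T y) (T z) + dist (T x) (T z) <
            dist x y + dist y z + dist z x) ∧
        (∃ x y : X, x ≠ y ∧ dist x y ≤ dist (T x) (T y)) ∧
        ¬ ∃ α : ℝ, 0 ≤ α ∧ α < 1 ∧
          ∀ x y z : X, x ≠ y → y ≠ z → x ≠ z →
            dist (T x) (T y) + dist (T y) (T z) + dist (T x) (T z) ≤
              α * (dist x y + dist y z + dist x z) := by
  refine ⟨YY, inferInstance, ?_, ?_, ?_, TT, ?_, ?_, ?_⟩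
  · apply Metric.complete_of_cauchySeq_tendsto
    intro u hu
    obtain ⟨N, hN⟩ := Metric.cauchySeq_iff'.1 hu 1 one_pos
    refine ⟨u N, tendsto_const_nhds.congr' ?_⟩
    filter_upwards [Filter.eventually_ge_atTop N] with n hn
    by_contra hne
    have h := hN n hn
    rw [YY_dist (Ne.symm hne)] at h
    linarith [ww_pos (u n).n, ww_pos (u N).n]
  · exact Function.Injective.countable (f := YY.n) (fun x y h => by cases x; cases y; simp_all)
  · exact Infinite.of_injective YY.mk (fun x y h => by simpa using h)
  · intro x y z hxy hyz hxz
    rw [TT_dist hxy, TT_dist hyz, TT_dist hxz, YY_dist hxy, YY_dist hyz, YY_dist hxz.symm]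
    rw [YY_ne] at hxy hyz hxz
    have hx := ww_le x.n
    have hy := ww_le y.n
    have hz := ww_le z.n
    have : 2 ≤ x.n ∨ 2 ≤ y.n ∨ 2 ≤ z.n := by omega
    rcases this with h | h | h <;> linarith [ww_lt _ h]
  · have h : (⟨0⟩ : YY) ≠ ⟨1⟩ := by simp
    refine ⟨⟨0⟩, ⟨1⟩, h, ?_⟩
    rw [TT_dist h, YY_dist h]
    norm_num [ww]
  · rintro ⟨α, h0, h1, H⟩
    have key : ∀ k : ℕ, 1 ≤ α * (1 + 2 * ww k) := by
      intro k
      have a : (⟨k⟩ : YY) ≠ ⟨k+1⟩ := by simp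
      have b : (⟨k+1⟩ : YY) ≠ ⟨k+2⟩ := by simp
      have c : (⟨k⟩ : YY) ≠ ⟨k+2⟩ := by simp
      have h := H _ _ _ a b c
      rw [TT_dist a, TT_dist b, TT_dist c, YY_dist a, YY_dist b, YY_dist c] at h
      dsimp only at h
      have p1 := ww_pos (k+1)
      have p2 := ww_pos (k+1+1)
      have p3 := ww_pos (k+2+1)
      have l1 := ww_le k
      have l2 : ww (k+2) ≤ ww (k+1) := ww_le (k+1)
      have := mul_le_mul_of_nonneg_left l1 h0
      have := mul_le_mul_of_nonneg_left l2 h0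
      linarith
    obtain ⟨k, hk⟩ := exists_nat_gt (2 / (1 - α))
    have hk' : 2 < k * (1 - α) := (div_lt_iff₀ (by linarith)).1 hk
    have hk2 : (2:ℝ) ≤ k := by nlinarith [Nat.cast_nonneg (α := ℝ) k]
    have e : (k:ℝ) * ww k = 1 := by
      unfold ww; rw [max_eq_left hk2]; field_simp
    have := mul_le_mul_of_nonneg_left (key k) (Nat.cast_nonneg (α := ℝ) k)
    have e2 : (k:ℝ) * (α * (1 + 2 * ww k)) = α * k + 2 * α * (k * ww k) := by ring
    rw [e2, e] at this
    linarith
end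

section
/- Let (X,d) be a metric space with at least 3 points, let F,G : ℝ≥0 × ℝ≥0 × ℝ≥0 → ℝ≥0 satisfy the (F,G)-conditions, and let T : X → X be an (F,G)-contracting mapping with constant α ∈ [0,1) which does not possess periodic points of prime period 2. Fix x₀ ∈ X, define xₙ₊₁ = Txₙ for all n ≥ 0, and suppose no xₙ is a fixed point of T. Let p₀ = G(d(x₀,x₁), d(x₁,x₂), d(x₂,x₀)). Then all the points xₙ are pairwise distinct, and for all n ≥ 1 and p ≥ 1 one has d(xₙ, xₙ₊ₚ) ≤ p₀·αⁿ⁻¹/(1−α); in particular (xₙ) is a Cauchy sequence. -/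
open scoped NNReal

theorem stmt15 {X : Type*} [MetricSpace X]
    (hX : ∃ x y z : X, x ≠ y ∧ y ≠ z ∧ x ≠ z)
    (F G : ℝ≥0 × ℝ≥0 × ℝ≥0 → ℝ≥0)
    (hFperm : ∀ ξ η ζ : ℝ≥0, F (η, ξ, ζ) = F (ξ, η, ζ) ∧ F (ξ, ζ, η) = F (ξ, η, ζ))
    (hGperm : ∀ ξ η ζ : ℝ≥0, G (η, ξ, ζ) = G (ξ, η, ζ) ∧ G (ξ, ζ, η) = G (ξ, η, ζ))
    (hG1 : ∀ ξ η ζ : ℝ≥0, ξ ≤ G (ξ, η, ζ))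
    (hFG : ∀ ξ η ζ : ℝ≥0, G (ξ, η, ζ) ≤ F (ξ, η, ζ))
    (hG0 : G (0, 0, 0) = 0)
    (hGcont0 : ContinuousAt G (0, 0, 0))
    (hGmono : Monotone G)
    (T : X → X) (α : ℝ≥0) (hα : α < 1)
    (hT : ∀ x y z : X, x ≠ y → y ≠ z → x ≠ z →
      F (nndist (T x) (T y), nndist (T y) (T z), nndist (T x) (T z)) ≤
        α * G (nndist x y, nndist y z, nndist x z))
    (hper : ¬ ∃ x : X, T (T x) = x ∧ T x ≠ x)
    (x₀ : X) (x : ℕ → X) (hx₀ : x 0 = x₀)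
    (hiter : ∀ n : ℕ, x (n + 1) = T (x n))
    (hnofix : ∀ n : ℕ, T (x n) ≠ x n)
    :
    (∀ m n : ℕ, m ≠ n → x m ≠ x n) ∧
    (∀ n p : ℕ, 1 ≤ n → 1 ≤ p →
      nndist (x n) (x (n + p)) ≤
        G (nndist (x 0) (x 1), nndist (x 1) (x 2), nndist (x 2) (x 0)) * α ^ (n - 1) / (1 - α)) ∧
    CauchySeq x := by
  have h1 : ∀ n, x n ≠ x (n + 1) := fun n h => hnofix n (by rw [← hiter, ← h])
  have h2 : ∀ n, x n ≠ x (n + 2) := fun n h =>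
    hper ⟨x n, by rw [← hiter, ← hiter]; exact h.symm, hnofix n⟩
  obtain ⟨p, hp⟩ : ∃ p : ℕ → ℝ≥0, ∀ n, p n =
      G (nndist (x n) (x (n + 1)), nndist (x (n + 1)) (x (n + 2)), nndist (x n) (x (n + 2))) :=
    ⟨_, fun _ => rfl⟩
  have hstep : ∀ n, p (n + 1) ≤ α * p n := by
    intro n
    have h := (hFG _ _ _).trans (hT (x n) (x (n + 1)) (x (n + 2)) (h1 n) (h1 (n + 1)) (h2 n))
    rw [← hiter, ← hiter, ← hiter] at h
    rw [hp (n + 1), hp n]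
    exact h
  have hd : ∀ n, nndist (x n) (x (n + 1)) ≤ p n := fun n => by rw [hp]; exact hG1 _ _ _
  have hpos : ∀ n, 0 < p n := fun n =>
    lt_of_lt_of_le (by rw [pos_iff_ne_zero, Ne, nndist_eq_zero]; exact h1 n) (hd n)
  have hanti : StrictAnti p := strictAnti_nat_of_succ_lt fun n =>
    (hstep n).trans_lt (mul_lt_of_lt_one_left (hpos n) hα)
  have hinj : ∀ m n : ℕ, m ≠ n → x m ≠ x n := by
    intro m n hmn h
    apply hmn
    apply hanti.injective
    have e1 : x (m + 1) = x (n + 1) := by rw [hiter, hiter, h]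
    have e2 : x (m + 2) = x (n + 2) := by rw [hiter (m + 1), hiter (n + 1), e1]
    rw [hp, hp, h, e1, e2]
  have hgeo : ∀ n, p n ≤ p 0 * α ^ n := by
    intro n
    induction n with
    | zero => simp
    | succ k ih =>
      calc p (k + 1) ≤ α * p k := hstep k
        _ ≤ α * (p 0 * α ^ k) := by gcongr
        _ = p 0 * α ^ (k + 1) := by ring
  have hdist : ∀ n, nndist (x n) (x (n + 1)) ≤ p 0 * α ^ n := fun n => (hd n).trans (hgeo n)
  have hone : 0 < 1 - α := tsub_pos_of_lt hα
  have hsum : (1 - α) + α = 1 := tsub_add_cancel_of_le hα.le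
  have hbd : ∀ k n, nndist (x n) (x (n + k)) ≤ p 0 * α ^ n / (1 - α) := by
    intro k
    induction k with
    | zero => intro n; simp
    | succ k ih =>
      intro n
      have e : n + (k + 1) = (n + 1) + k := by ring
      rw [e]
      calc nndist (x n) (x (n + 1 + k))
          ≤ nndist (x n) (x (n + 1)) + nndist (x (n + 1)) (x (n + 1 + k)) := nndist_triangle _ _ _
        _ ≤ p 0 * α ^ n + p 0 * α ^ (n + 1) / (1 - α) := add_le_add (hdist n) (ih (n + 1))
        _ = p 0 * α ^ n * ((1 - α) + α) / (1 - α) := by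
          rw [mul_add, add_div, mul_div_assoc (p 0 * α ^ n) (1 - α), div_self hone.ne', mul_one,
            pow_succ, mul_assoc]
        _ = p 0 * α ^ n / (1 - α) := by rw [hsum, mul_one]
  refine ⟨hinj, ?_, ?_⟩
  · intro n k _ _
    have e0 : G (nndist (x 0) (x 1), nndist (x 1) (x 2), nndist (x 2) (x 0)) = p 0 := by
      rw [hp, nndist_comm (x 2) (x 0)]
    rw [e0]
    refine (hbd k n).trans ?_
    have : α ^ n ≤ α ^ (n - 1) := pow_le_pow_of_le_one zero_le hα.le (Nat.sub_le n 1)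
    gcongr
  · refine cauchySeq_of_le_geometric (α : ℝ) (p 0 : ℝ) (by exact_mod_cast hα) fun n => ?_
    have := hdist n
    rw [← NNReal.coe_le_coe] at this
    simpa using this
end
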